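/- Consistency of MDL model selection for individual random sequences: let {P_n}_{n∈ℕ} be a uniformly computable family of probabilities on (Ω,B), α a computable probability on ℕ with α(n) > 0 for all n, and n̂(x) := argmax_n α(n) P_n(x). Then R^{P_{n*}} ∩ ∩_{n≠n*} (R^{P_n})^c ⊆ {x∞ : lim_{x→x∞} n̂(x) = n*}, i.e., along prefixes x of any sequence x∞ that is random for P_{n*} and random for no other P_n, every choice of maximizers n̂(x) eventually equals n*. -/

import Mathlib

/-!
Write `P` for `P_{n*}` and let `ω` be random for `P` and for no other `P_n`. All prefixes of `ω`
have positive `P`-probability, because a null cylinder is itself a Martin-Löf test. Each step below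
produces uniformly recursively enumerable sets of strings `W_j` that cover `P`-measure at most
`4 ^ (-j)`; by an effective Borel–Cantelli argument (`eventually_notMem_of_random`) no prefix of
`ω` lies in `W_j` once `j` is large. The measure bounds come from Ville's inequality
(`measure_biUnion_cyl_le`): where `P(x) < c Q(x)` holds on a set of strings, the same bound holds for
the union of their cylinders.

* Large indices (`weighted_likelihood_le_of_ge`). Since `α` is computable with sum `1`, there is a
  computable `N` with `∑_{n ≥ N j} α n ≤ 8 ^ (-j)` (`exists_tail_modulus`). Taking for `W_j` the
  strings with `P(x) < 2 ^ j α(n) P_n(x)` for some `n ≥ N j` shows that for large `j` all these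
  models satisfy `α(n) P_n(x) ≤ 2 ^ (-j) P(x)` at every prefix `x` of `ω`. Once `2 ^ (-j) < α(n*)`,
  no maximizer is `≥ N j`.
* Each remaining index `n ≠ n*` (`likelihood_ratio_le_of_not_random`). As `ω` is not random for
  `P_n`, it is captured by some `P_n`-test `U`. Taking for `W_j` the extensions `x` of strings in
  `U_{3j}` with `P(x) < 2 ^ j P_n(x)` shows that `P_n(x) / P(x) → 0` along `ω`, so `n` is
  eventually not a maximizer.

Only finitely many indices fall under the second case, so the maximizer is eventually `n*`.

The enumerations rest on comparing computable reals (`CReal.lt_re`). The approximations are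
`ℚ`-valued, and the computability structure on `ℚ` is the one of its denumerable instance, which
numbers the rationals by the rank of their (numerator, denominator) code among all valid codes;
`computable_ratCode` recovers numerator and denominator from that number.
-/


open MeasureTheory Filter Set
open scoped ENNReal NNReal

namespace AlgRand

/-- `S` : finite binary strings. -/
abbrev S : Type := List Bool

/-- `Seq` : infinite binary sequences (the space Ω). -/
abbrev Seq : Type := ℕ → Bool

/-- A finite string is a prefix of an infinite sequence. -/
def PrefixSeq (x : S) (ω : Seq) : Prop := ∀ i : Fin x.length, x.get i = ω i

/-- The first `n` bits of an infinite sequence. -/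
def seqTake (ω : Seq) (n : ℕ) : S := List.ofFn fun i : Fin n => ω i

/-- Cylinder set Δ(x) ⊆ Ω. -/
def cyl (x : S) : Set Seq := {ω | PrefixSeq x ω}

/-- Product cylinder Δ(x,y) ⊆ Ω². -/
def cyl2 (xy : S × S) : Set (Seq × Seq) := cyl xy.1 ×ˢ cyl xy.2

/-- Prefix (partial order) on S². -/
def Pre2 (a b : S × S) : Prop := a.1 <+: b.1 ∧ a.2 <+: b.2

/-- A pair of strings is a (strict) prefix of a pair of sequences. -/
def Pre2Seq (a : S × S) (ω : Seq × Seq) : Prop := PrefixSeq a.1 ω.1 ∧ PrefixSeq a.2 ω.2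

/-- Recursively enumerable subset of a primcodable type. -/
def RESet {β : Type} [Primcodable β] (A : Set β) : Prop :=
  ∃ f : ℕ → Option β, Computable f ∧ A = {a | ∃ n, f n = some a}

/-- A computable probability measure on Ω. -/
def ComputableProb (P : Measure Seq) : Prop :=
  IsProbabilityMeasure P ∧
    ∃ p : S × ℕ → ℚ, Computable p ∧
      ∀ (x : S) (k : ℕ), 0 < k → |(P (cyl x)).toReal - (p (x, k) : ℝ)| < 1 / k

/-- A computable probability measure on Ω². -/
def ComputableProb2 (P : Measure (Seq × Seq)) : Prop :=
  IsProbabilityMeasure P ∧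
    ∃ p : (S × S) × ℕ → ℚ, Computable p ∧
      ∀ (xy : S × S) (k : ℕ), 0 < k → |(P (cyl2 xy)).toReal - (p (xy, k) : ℝ)| < 1 / k

/-- Ũ_n, the open set covered by the n-th level of a test. -/
def testUnion {α β : Type} (C : β → Set α) (U : Set (ℕ × β)) (n : ℕ) : Set α :=
  ⋃ x ∈ {x | (n, x) ∈ U}, C x

/-- Martin-Löf test w.r.t. a measure, generic in the cylinder function `C`. -/
def IsMLTest {α β : Type} [MeasurableSpace α] [Primcodable β]
    (C : β → Set α) (P : Measure α) (U : Set (ℕ × β)) : Prop :=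
  RESet U ∧ (∀ n, testUnion C U (n + 1) ⊆ testUnion C U n) ∧
    ∀ n, P (testUnion C U n) < (2⁻¹ : ℝ≥0∞) ^ n

/-- Martin-Löf randomness: ω avoids the limit of every test. -/
def MLRandom {α β : Type} [MeasurableSpace α] [Primcodable β]
    (C : β → Set α) (P : Measure α) (ω : α) : Prop :=
  ∀ U, IsMLTest C P U → ω ∉ ⋂ n, testUnion C U n

/-- ω ∈ R^P, for P on Ω. -/
abbrev Random1 (P : Measure Seq) (ω : Seq) : Prop := MLRandom cyl P ω

/-- ω ∈ R^P, for P on Ω². -/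
abbrev Random2 (P : Measure (Seq × Seq)) (ω : Seq × Seq) : Prop := MLRandom cyl2 P ω

/-- Marginal distribution P_X on the first coordinate. -/
noncomputable def margX (P : Measure (Seq × Seq)) : Measure Seq := P.map Prod.fst

/-- Marginal distribution P_Y on the second coordinate. -/
noncomputable def margY (P : Measure (Seq × Seq)) : Measure Seq := P.map Prod.snd

/-- Conditional probability P(x|y) = P(x,y)/P_Y(y), with value 0 when P_Y(y) = 0. -/
noncomputable def condP (P : Measure (Seq × Seq)) (x y : S) : ℝ :=
  (P (cyl2 (x, y))).toReal / (P (Set.univ ×ˢ cyl y)).toReal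

/-- P(x|yinf) := lim_{y → yinf} P(x|y) along prefixes of yinf (junk value if no limit). -/
noncomputable def condPLim (P : Measure (Seq × Seq)) (x : S) (yinf : Seq) : ℝ :=
  limUnder atTop fun m => condP P x (seqTake yinf m)

/-- Conditional probability P(y|x) = P(x,y)/P_X(x), with value 0 when P_X(x) = 0. -/
noncomputable def condX (P : Measure (Seq × Seq)) (y x : S) : ℝ :=
  (P (cyl2 (x, y))).toReal / (P (cyl x ×ˢ Set.univ)).toReal

/-- P(y|xinf) := lim_{x → xinf} P(y|x) along prefixes of xinf (junk value if no limit). -/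
noncomputable def condXLim (P : Measure (Seq × Seq)) (y : S) (xinf : Seq) : ℝ :=
  limUnder atTop fun m => condX P y (seqTake xinf m)

/-- The set S ∪ Ω of finite or infinite binary sequences. -/
inductive SW : Type where
  | fin : S → SW
  | inf : Seq → SW

/-- Prefix order ⊑ on S ∪ Ω. -/
def SW.le : SW → SW → Prop
  | .fin x, .fin y => x <+: y
  | .fin x, .inf ω => PrefixSeq x ω
  | .inf ω, .inf ω' => ω = ω'
  | .inf _, .fin _ => False

/-- (S ∪ Ω)². -/
abbrev SW2 : Type := SW × SW

/-- Componentwise prefix order ⊑ on (S ∪ Ω)². -/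
def SW2.le (a b : SW2) : Prop := SW.le a.1 b.1 ∧ SW.le a.2 b.2

/-- Length |x| ∈ ℕ∞ of an element of S ∪ Ω. -/
def SW.len : SW → ℕ∞
  | .fin x => (x.length : ℕ∞)
  | .inf _ => ⊤

/-- |p| = |p₁| + |p₂| for p ∈ (S ∪ Ω)². -/
def SW2.len (a : SW2) : ℕ∞ := SW.len a.1 + SW.len a.2

/-- Δ(x) for x ∈ S ∪ Ω. -/
def SW.cylW : SW → Set Seq
  | .fin x => cyl x
  | .inf ω => {ω}

/-- Δ(x,y) for (x,y) ∈ (S ∪ Ω)². -/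
def SW2.cylW (a : SW2) : Set (Seq × Seq) := SW.cylW a.1 ×ˢ SW.cylW a.2

/-- Embedding S → S ∪ Ω. -/
def emb1 (x : S) : SW := SW.fin x

/-- Embedding S² → (S ∪ Ω)². -/
def emb2 (p : S × S) : SW2 := (SW.fin p.1, SW.fin p.2)

/-- Embedding Ω² → (S ∪ Ω)². -/
def inf2 (ω : Seq × Seq) : SW2 := (SW.inf ω.1, SW.inf ω.2)

/-- Least upper bound with respect to a relation. -/
def IsSupRel {V : Type} (le : V → V → Prop) (A : Set V) (s : V) : Prop :=
  (∀ a ∈ A, le a s) ∧ ∀ b, (∀ a ∈ A, le a b) → le s b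

/-- `f` is a computable monotone function defined by an r.e. set `F` satisfying
condition (3) of the paper:  (λ,λ) ∈ F_p and ⋁_{p'⊑p} F_{p'} exists for every p,
and f(q) = ⋁ {x : ∃ p' ⊑ q, (p',x) ∈ F}. -/
def CompMono {D E : Type} {W V : Type} [Primcodable D] [Primcodable E]
    (embD : D → W) (leW : W → W → Prop) (embE : E → V) (leV : V → V → Prop)
    (eps : E) (f : W → V) : Prop :=
  ∃ F : Set (D × E), RESet F ∧
    (∀ p : D, (p, eps) ∈ F ∧
        ∃ s, IsSupRel leV (embE '' {x | ∃ p' : D, leW (embD p') (embD p) ∧ (p', x) ∈ F}) s) ∧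
    ∀ q : W, IsSupRel leV (embE '' {x | ∃ p' : D, leW (embD p') q ∧ (p', x) ∈ F}) (f q)

/-- Computable monotone function (S ∪ Ω)² → (S ∪ Ω)². -/
def CompMono22 (f : SW2 → SW2) : Prop := CompMono emb2 SW2.le emb2 SW2.le (([], []) : S × S) f

/-- Computable monotone function S ∪ Ω → (S ∪ Ω)². -/
def CompMono12 (g : SW → SW2) : Prop := CompMono emb1 SW.le emb2 SW2.le (([], []) : S × S) g

/-- Computable monotone function (S ∪ Ω)² → S ∪ Ω. -/
def CompMono21 (e : SW2 → SW) : Prop := CompMono emb2 SW2.le emb1 SW.le ([] : S) e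

/-- Computable monotone function S ∪ Ω → S ∪ Ω. -/
def CompMono11 (ρ : SW → SW) : Prop := CompMono emb1 SW.le emb1 SW.le ([] : S) ρ

/-- Km²_f(x) := min{|p₁|+|p₂| : x ⊑ f(p₁,p₂)} ∈ ℕ∞. -/
noncomputable def Km2 (f : SW2 → SW2) (x : SW2) : ℕ∞ :=
  ⨅ (p : SW2) (_ : SW2.le x (f p)), SW2.len p

/-- Km_f(x) := min{|p| : x ⊑ f(p,λ)} ∈ ℕ∞. -/
noncomputable def Km1 (f : SW2 → SW2) (x : SW2) : ℕ∞ :=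
  ⨅ (p : SW) (_ : SW2.le x (f (p, SW.fin []))), SW.len p

/-- Km(x|y) := min{|p| : (x,λ) ⊑ u(p,y)} ∈ ℕ∞. -/
noncomputable def KmCond (u : SW2 → SW2) (x y : SW) : ℕ∞ :=
  ⨅ (p : SW) (_ : SW2.le (x, SW.fin []) (u (p, y))), SW.len p

/-- Km_g(x) := min{|p| : x ⊑ g(p)} for g : S ∪ Ω → (S ∪ Ω)². -/
noncomputable def KmOf12 (g : SW → SW2) (x : SW2) : ℕ∞ :=
  ⨅ (p : SW) (_ : SW2.le x (g p)), SW.len p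

/-- Optimality of a computable monotone function on (S ∪ Ω)². -/
def Optimal (u : SW2 → SW2) : Prop :=
  CompMono22 u ∧
    ∀ f : SW2 → SW2, CompMono22 f → ∃ c : ℕ, ∀ x : SW2, Km2 u x ≤ Km2 f x + (c : ℕ∞)

/-- 2^{-n} for n ∈ ℕ∞ (with 2^{-∞} = 0), as an extended nonnegative real. -/
noncomputable def tpow (n : ℕ∞) : ℝ≥0∞ := if n = ⊤ then 0 else (2⁻¹ : ℝ≥0∞) ^ n.toNat

/-- Non-overlapping subset of (S ∪ Ω)². -/
def NonOverlapW (A : Set SW2) : Prop := A.Pairwise fun a b => SW2.cylW a ∩ SW2.cylW b = ∅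

/-- Non-overlapping subset of S². -/
def NonOverlapF (A : Set (S × S)) : Prop := A.Pairwise fun a b => cyl2 a ∩ cyl2 b = ∅

/-- Condition (4): any two members of A are comparable or have disjoint cylinders. -/
def Cond4 (A : Set (S × S)) : Prop :=
  ∀ a ∈ A, ∀ b ∈ A, Pre2 a b ∨ Pre2 b a ∨ cyl2 a ∩ cyl2 b = ∅

/-- Condition (5): relative complements of cylinders are non-overlapping unions within A. -/
def Cond5 (A : Set (S × S)) : Prop :=
  ∀ a ∈ A, ∀ b ∈ A, ∃ α ⊆ A, NonOverlapF α ∧ cyl2 a ∩ (cyl2 b)ᶜ = ⋃ z ∈ α, cyl2 z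

/-- A(xinf) := {x ∈ A | x ⊏ xinf}. -/
def Asec (A : Set (S × S)) (ω : Seq × Seq) : Set (S × S) := {a ∈ A | Pre2Seq a ω}

/-- sup_{x ∈ A} (−log P(x) − K(x)) < ∞. -/
def KmBound (P : Measure (Seq × Seq)) (K : S × S → ℕ∞) (A : Set (S × S)) : Prop :=
  ∃ c : ℝ, ∀ x ∈ A, ∀ k : ℕ, K x = (k : ℕ∞) →
    0 < P (cyl2 x) ∧ -Real.logb 2 ((P (cyl2 x)).toReal) ≤ (k : ℝ) + c

/-- sup_{x ∈ A} |log P(x) + K(x)| < ∞. -/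
def KmBoundAbs (P : Measure (Seq × Seq)) (K : S × S → ℕ∞) (A : Set (S × S)) : Prop :=
  ∃ c : ℝ, ∀ x ∈ A, ∃ k : ℕ, K x = (k : ℕ∞) ∧ 0 < P (cyl2 x) ∧
    |Real.logb 2 ((P (cyl2 x)).toReal) + (k : ℝ)| ≤ c

/-- The conditional probability P(·|yinf) is computable relative to the oracle yinf:
there is a partial computable A(x,y,k), monotone in y, approximating P(x|yinf)
to within 1/k along prefixes y of yinf. -/
def CondComputableAt (P : Measure (Seq × Seq)) (yinf : Seq) : Prop :=
  ∃ A : (S × S) × ℕ →. ℚ, Partrec A ∧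
    (∀ (x y z : S) (k : ℕ) (q : ℚ), q ∈ A ((x, y), k) → y <+: z → q ∈ A ((x, z), k)) ∧
    ∀ (x : S) (k : ℕ), 0 < k → ∃ (m : ℕ) (q : ℚ), q ∈ A ((x, seqTake yinf m), k) ∧
      |condPLim P x yinf - (q : ℝ)| < 1 / k

/-- A Martin-Löf test w.r.t. Q which is r.e. relative to the oracle yinf. -/
def RelMLTest (Q : Measure Seq) (yinf : Seq) (U : ℕ → Set S) : Prop :=
  (∃ B : (ℕ × ℕ) × S →. S, Partrec B ∧
      (∀ (i n : ℕ) (y z x : S), x ∈ B ((i, n), y) → y <+: z → x ∈ B ((i, n), z)) ∧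
      ∀ n, U n = {x | ∃ i m, x ∈ B ((i, n), seqTake yinf m)}) ∧
  (∀ n, (⋃ x ∈ U (n + 1), cyl x) ⊆ ⋃ x ∈ U n, cyl x) ∧
  ∀ n, Q (⋃ x ∈ U n, cyl x) < (2⁻¹ : ℝ≥0∞) ^ n

/-- Martin-Löf randomness w.r.t. Q relative to the oracle yinf. -/
def RelMLRandom (Q : Measure Seq) (yinf xinf : Seq) : Prop :=
  ∀ U, RelMLTest Q yinf U → xinf ∉ ⋂ n, ⋃ x ∈ U n, cyl x

/-- Likelihood ratio r(x) = Q(x)/P(x), with value 0 when P(x) = 0. -/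
noncomputable def ratio (P Q : Measure Seq) (x : S) : ℝ :=
  (Q (cyl x)).toReal / (P (cyl x)).toReal

/-- P(·|yinf) f,(xinf,yinf)-effectively converges with rate g. -/
def EffConv (P : Measure (Seq × Seq)) (xinf yinf : Seq) (f : ℕ → ℚ) (g : ℕ → ℕ) : Prop :=
  Computable g ∧ Monotone g ∧
    ∀ x y : S, PrefixSeq x xinf → PrefixSeq y yinf → g x.length ≤ y.length →
      |condP P x y / condPLim P x yinf - 1| < (f x.length : ℝ)

/-- A_g(xinf,yinf) := {(x,y) : |y| = g(|x|), (x,y) ⊏ (xinf,yinf)}. -/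
def AgSec (g : ℕ → ℕ) (xinf yinf : Seq) : Set (S × S) :=
  {xy | xy.2.length = g xy.1.length ∧ PrefixSeq xy.1 xinf ∧ PrefixSeq xy.2 yinf}

/-- A uniformly computable family of probability measures on Ω. -/
def UnifComputableFam (Pn : ℕ → Measure Seq) : Prop :=
  (∀ n, IsProbabilityMeasure (Pn n)) ∧
    ∃ A : (ℕ × S) × ℕ → ℚ, Computable A ∧
      ∀ (n : ℕ) (x : S) (k : ℕ), 0 < k →
        |(A ((n, x), k) : ℝ) - ((Pn n) (cyl x)).toReal| < 1 / k

/-- A computable sequence of reals (e.g. a computable probability on ℕ). -/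
def ComputableRealSeq (α : ℕ → ℝ) : Prop :=
  ∃ a : ℕ × ℕ → ℚ, Computable a ∧ ∀ (n k : ℕ), 0 < k → |α n - (a (n, k) : ℝ)| < 1 / k

/-- The mixture Σ_n α(n) P_n. -/
noncomputable def mixture (α : ℕ → ℝ) (Pn : ℕ → Measure Seq) : Measure Seq :=
  Measure.sum fun n => ENNReal.ofReal (α n) • Pn n

/-- The conditional probability measure P(·|y) on Ω, for a finite string y. -/
noncomputable def condMeasGivenY (P : Measure (Seq × Seq)) (y : S) : Measure Seq :=
  (P (Set.univ ×ˢ cyl y))⁻¹ • ((P.restrict (Set.univ ×ˢ cyl y)).map Prod.fst)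

/-- The posterior distribution P_{Y|X}(·|x) on Ω, for a finite string x. -/
noncomputable def postMeas (P : Measure (Seq × Seq)) (x : S) : Measure Seq :=
  (P (cyl x ×ˢ Set.univ))⁻¹ • ((P.restrict (cyl x ×ˢ Set.univ)).map Prod.snd)

/-! ### Decoding rational numbers -/

open Encodable Denumerable in
/-- The denumerable structure derived from an encodable infinite type lists the elements by
increasing code: the element of index `n` has the `n`-th smallest code. -/
lemma encode_ofNat_of_infinite {α : Type} [E : Encodable α] [Infinite α] (n : ℕ) :
    haveI : Infinite (Set.range (@encode α _)) :=
      Set.infinite_coe_iff.2 (Set.infinite_range_of_injective encode_injective)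
    haveI := decidableRangeEncode α
    @encode α E (@Denumerable.ofNat α (ofEncodableOfInfinite α) n) =
      (Nat.Subtype.ofNat (Set.range (@encode α _)) n : ℕ) := by
  let _ : Infinite (Set.range (@encode α _)) :=
    Set.infinite_coe_iff.2 (Set.infinite_range_of_injective encode_injective)
  let _ := decidableRangeEncode α
  let _ := Nat.Subtype.denumerable (Set.range (@encode α _))
  have h := Denumerable.ofEquiv_ofNat (Set.range (@encode α _)) (equivRangeEncode α) n
  have h2 : @Denumerable.ofNat α (ofEncodableOfInfinite α) n =
      (equivRangeEncode α).symm (ofNat (Set.range (@encode α _)) n) := h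
  rw [h2]
  have h3 := (equivRangeEncode α).apply_symm_apply (ofNat (Set.range (@encode α _)) n)
  have h4 := congrArg Subtype.val h3
  exact h4

/-- `c` is the pairing of the code of an integer and of a positive natural number coprime to it.
The absolute value of the integer coded by `m` is `(m + 1) / 2`, and coprimality is written with
a quantifier bounded by `c + 2`, so that the predicate is visibly primitive recursive. -/
def IsCode (c : ℕ) : Prop :=
  0 < c.unpair.2 ∧ ∀ k < c + 2, k ∣ (c.unpair.1 + 1)/2 → k ∣ c.unpair.2 → k ≤ 1

/-- The code of a rational number as the pair (numerator, denominator). -/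
def ratCode (q : ℚ) : ℕ := Nat.pair (Encodable.encode q.num) q.den

lemma enc_eq (q : ℚ) : @Encodable.encode ℚ Rat.instEncodable q = ratCode q := by
  rfl

lemma natAbs_enc (z : ℤ) : z.natAbs = (Encodable.encode z + 1) / 2 := by
  cases z with
  | ofNat n => change n = (2 * n + 1) / 2; omega
  | negSucc n => change n + 1 = (2 * n + 1 + 1) / 2; omega

lemma enc_even (z : ℤ) : Encodable.encode z % 2 = 0 ↔ 0 ≤ z := by
  cases z with
  | ofNat n => change (2 * n) % 2 = 0 ↔ 0 ≤ (n : ℤ); omega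
  | negSucc n => change (2 * n + 1) % 2 = 0 ↔ _ ; simp

lemma isCode_iff (c : ℕ) : IsCode c ↔ c ∈ Set.range (@Encodable.encode ℚ Rat.instEncodable) := by
  constructor
  · rintro ⟨h1, h2⟩
    obtain ⟨z, hz⟩ : ∃ z : ℤ, Encodable.encode z = c.unpair.1 :=
      ⟨Denumerable.ofNat ℤ _, Denumerable.encode_ofNat _⟩
    rw [← hz, ← natAbs_enc] at h2
    refine ⟨⟨z, c.unpair.2, h1.ne', ?_⟩, ?_⟩
    · rw [Nat.coprime_iff_gcd_eq_one]
      have hp : 0 < Nat.gcd z.natAbs c.unpair.2 := Nat.gcd_pos_of_pos_right _ h1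
      have hle := Nat.le_of_dvd h1 (Nat.gcd_dvd_right z.natAbs c.unpair.2)
      have := h2 _ (by have := Nat.unpair_right_le c; omega) (Nat.gcd_dvd_left _ _) (Nat.gcd_dvd_right _ _)
      omega
    · rw [enc_eq]
      simp [ratCode, hz]
  · rintro ⟨q, rfl⟩
    rw [enc_eq]
    simp only [IsCode, ratCode, Nat.unpair_pair]
    refine ⟨q.den_pos, fun k _ h1 h2 => ?_⟩
    rw [← natAbs_enc] at h1
    have := q.reduced
    have h3 := Nat.dvd_gcd h1 h2
    rw [Nat.coprime_iff_gcd_eq_one.1 this] at h3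
    exact Nat.le_of_dvd one_pos h3

lemma primrec_isCode : PrimrecPred IsCode := by
  have hu1 : Primrec fun c : ℕ => c.unpair.1 := Primrec.fst.comp Primrec.unpair
  have hu2 : Primrec fun c : ℕ => c.unpair.2 := Primrec.snd.comp Primrec.unpair
  have ha : Primrec fun c : ℕ => (c.unpair.1 + 1) / 2 :=
    Primrec.nat_div.comp (Primrec.succ.comp hu1) (Primrec.const 2)
  have hdvd : ∀ f g : ℕ × ℕ → ℕ, Primrec f → Primrec g → PrimrecPred fun p => f p ∣ g p := by
    intro f g hf hg
    exact (Primrec.eq.comp (Primrec.nat_mod.comp hg hf) (Primrec.const 0)).of_eq fun p =>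
      (Nat.dvd_iff_mod_eq_zero).symm
  have hR : PrimrecRel fun k c : ℕ => k ∣ (c.unpair.1 + 1)/2 → k ∣ c.unpair.2 → k ≤ 1 := by
    have := ((hdvd (fun p => p.1) (fun p => (p.2.unpair.1 + 1)/2) Primrec.fst
      (ha.comp Primrec.snd)).not.or ((hdvd (fun p => p.1) (fun p => p.2.unpair.2) Primrec.fst
      (hu2.comp Primrec.snd)).not.or (Primrec.nat_le.comp Primrec.fst (Primrec.const 1))))
    exact (this.of_eq fun p => by tauto)
  have h2 := (hR.forall_lt).comp (Primrec.succ.comp Primrec.succ) Primrec.id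
  exact (Primrec.nat_lt.comp (Primrec.const 0) hu2).and h2

open Encodable Denumerable in
/-- The code that `ℚ` carries for the purposes of computability is the rank of `ratCode q` in the
decidable infinite set of valid codes; iterating an unbounded search for the next valid code
recovers `ratCode q` from its rank. -/
lemma computable_ratCode : Computable ratCode := by
  classical
  let s : Set ℕ := Set.range (@Encodable.encode ℚ Rat.instEncodable)
  let hinf : Infinite s := Set.infinite_coe_iff.2
    (Set.infinite_range_of_injective (@encode_injective ℚ Rat.instEncodable))
  let hdec : DecidablePred (· ∈ s) := decidableRangeEncode ℚ
  have hP : ComputablePred fun p : ℕ × ℕ => p.1 + p.2 + 1 ∈ s := by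
    have : PrimrecPred fun p : ℕ × ℕ => IsCode (p.1 + p.2 + 1) :=
      primrec_isCode.comp (Primrec.succ.comp (Primrec.nat_add.comp Primrec.fst Primrec.snd))
    exact (this.of_eq fun p => isCode_iff _).computablePred
  have hex : ∀ x : ℕ, ∃ m, x + m + 1 ∈ s := by
    intro x
    obtain ⟨y, hy, hxy⟩ := (Set.infinite_coe_iff.1 hinf).exists_gt x
    exact ⟨y - (x + 1), by rwa [show x + (y - (x+1)) + 1 = y by omega]⟩
  have hfind := Computable.find hP hex
  have hstep : Computable₂ fun (_ : ℕ) (p : ℕ × ℕ) => p.2 + Nat.find (hex p.2) + 1 :=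
    (Computable.succ.comp (Primrec.nat_add.to_comp.comp (Computable.snd.comp Computable.snd)
      (hfind.comp (Computable.snd.comp Computable.snd))))
  have hrec := Computable.nat_rec Computable.id (Computable.const (((⊥ : s)) : ℕ)) hstep
  have key : ∀ n : ℕ,
      (Nat.rec (((⊥ : s)) : ℕ) (fun _ IH => IH + Nat.find (hex IH) + 1) n : ℕ)
        = (Nat.Subtype.ofNat s n : ℕ) := by
    intro n
    induction n with
    | zero => rfl
    | succ n ih =>
      simp only [Nat.Subtype.ofNat, Nat.Subtype.succ]
      rw [ih]
  refine (hrec.comp (Computable.encode (α := ℚ))).of_eq fun q => ?_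
  simp only [id]
  refine (key _).trans ?_
  rw [← enc_eq]
  have := encode_ofNat_of_infinite (α := ℚ) (@encode ℚ (Rat.instDenumerable.toEncodable) q)
  have h0 : @Denumerable.ofNat ℚ (ofEncodableOfInfinite ℚ)
      (@encode ℚ (Rat.instDenumerable.toEncodable) q) = q := Denumerable.ofNat_encode q
  rw [h0] at this
  exact this.symm

/-! ### Computable nonnegative reals -/

/-- The value `⌊q * m⌋₊` read off the code `c = ratCode q`; codes of nonnegative integers are
even, so an odd first component means `q < 0` and the value is `0`. -/
def codeFloor (c m : ℕ) : ℕ :=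
  if c.unpair.1 % 2 = 0 then (c.unpair.1 / 2 * m) / c.unpair.2 else 0

lemma primrec_codeFloor : Primrec₂ codeFloor := by
  have hu1 : Primrec fun p : ℕ × ℕ => p.1.unpair.1 :=
    Primrec.fst.comp (Primrec.unpair.comp Primrec.fst)
  have hu2 : Primrec fun p : ℕ × ℕ => p.1.unpair.2 :=
    Primrec.snd.comp (Primrec.unpair.comp Primrec.fst)
  exact Primrec.ite (Primrec.eq.comp (Primrec.nat_mod.comp hu1 (Primrec.const 2)) (Primrec.const 0))
      (Primrec.nat_div.comp (Primrec.nat_mul.comp (Primrec.nat_div.comp hu1 (Primrec.const 2))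
        Primrec.snd) hu2) (Primrec.const 0)

/-- The truncation `⌊q * m⌋₊`, defined through the code of `q`. -/
def ratFloor (q : ℚ) (m : ℕ) : ℕ := codeFloor (ratCode q) m

lemma computable_ratFloor : Computable₂ ratFloor :=
  primrec_codeFloor.to_comp.comp (computable_ratCode.comp Computable.fst) Computable.snd

lemma ratFloor_eq (q : ℚ) (m : ℕ) : ratFloor q m = ⌊q * m⌋₊ := by
  unfold ratFloor codeFloor ratCode
  simp only [Nat.unpair_pair, enc_even]
  split_ifs with h
  · have h1 := natAbs_enc q.num
    have h2 := (enc_even q.num).2 h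
    have h3 : Encodable.encode q.num / 2 = q.num.natAbs := by omega
    rw [h3]
    have : q * m = ((q.num.natAbs * m : ℕ) : ℚ) / (q.den : ℚ) := by
      have h4 : (q.num.natAbs : ℚ) = q.num := by
        have : ((q.num.natAbs : ℤ) : ℚ) = q.num := by rw [Int.natAbs_of_nonneg h]
        rwa [Int.cast_natCast] at this
      push_cast
      rw [h4]
      conv_lhs => rw [← Rat.num_div_den q]
      ring
    rw [this, Nat.floor_div_natCast, Nat.floor_natCast]
  · symm
    apply Nat.floor_of_nonpos
    have : q < 0 := by rw [← Rat.num_neg]; omega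
    exact mul_nonpos_of_nonpos_of_nonneg this.le (by positivity)

/-- A uniformly computable family of nonnegative reals `u x`, encoded by integer approximations
`b (x, k)` of `k * u x`. The fixed error `2` leaves room for rounding a rational approximation,
and integer values keep all later arithmetic in `ℕ`. -/
def CReal {β : Type} [Primcodable β] (u : β → ℝ) : Prop :=
  (∀ x, 0 ≤ u x) ∧ ∃ b : β × ℕ → ℕ, Computable b ∧ ∀ x k, |(b (x, k) : ℝ) - k * u x| ≤ 2

lemma CReal.comp {β γ : Type} [Primcodable β] [Primcodable γ] {u : β → ℝ} (hu : CReal u)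
    {f : γ → β} (hf : Computable f) : CReal fun x => u (f x) := by
  obtain ⟨h0, b, hb, h⟩ := hu
  exact ⟨fun x => h0 _, fun p => b (f p.1, p.2), hb.comp ((hf.comp Computable.fst).pair
    Computable.snd), fun x k => h _ _⟩

lemma CReal.one {β : Type} [Primcodable β] : CReal fun _ : β => (1 : ℝ) :=
  ⟨fun _ => zero_le_one, fun p => p.2, Computable.snd, fun x k => by simp⟩

lemma CReal.of_rat {β : Type} [Primcodable β] {u : β → ℝ} (h0 : ∀ x, 0 ≤ u x)
    {a : β × ℕ → ℚ} (ha : Computable a) (h : ∀ x k, 0 < k → |u x - (a (x, k) : ℝ)| < 1 / k) :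
    CReal u := by
  refine ⟨h0, fun p => ratFloor (a p) p.2, computable_ratFloor.comp ha Computable.snd, ?_⟩
  intro x k
  dsimp only
  rw [ratFloor_eq]
  rcases Nat.eq_zero_or_pos k with rfl | hk
  · simp
  have hk' : (0 : ℝ) < k := by exact_mod_cast hk
  have h1 := h x k hk
  have h2 : |k * u x - a (x, k) * k| < 1 := by
    have : k * u x - a (x, k) * k = k * (u x - a (x, k)) := by ring
    rw [this, abs_mul, abs_of_pos hk']
    calc (k : ℝ) * |u x - a (x, k)| < k * (1 / k) := by gcongr
      _ = 1 := by field_simp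
  rw [abs_lt] at h2
  have hku : 0 ≤ k * u x := mul_nonneg hk'.le (h0 x)
  have hcast : ∀ q : ℚ, (⌊q⌋₊ : ℝ) = (⌊(q : ℝ)⌋₊ : ℝ) := fun q => by
    rw [← Int.floor_toNat, ← Int.floor_toNat, Rat.floor_cast]
  rw [hcast]
  push_cast
  rw [abs_le]
  constructor
  · have := Nat.lt_floor_add_one ((a (x, k) : ℝ) * k)
    linarith
  · rcases le_total 0 ((a (x, k) : ℝ) * k) with h3 | h3
    · have := Nat.floor_le h3
      linarith
    · rw [Nat.floor_of_nonpos h3]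
      push_cast
      linarith

/-- The strict inequality `v < c * (a * u)` between computable nonnegative reals is recursively
enumerable, uniformly in the parameter `x`: `D (x, k)` compares the approximations of precision
`1 / k`, with margins that make a positive answer a proof of the inequality. -/
lemma CReal.lt_re {β : Type} [Primcodable β] {a u v : β → ℝ} (ha : CReal a) (hu : CReal u)
    (hv : CReal v) {c : β → ℕ} (hc : Computable c) :
    ∃ D : β × ℕ → Bool, Computable D ∧ ∀ x, (∃ k, D (x, k) = true) ↔ v x < c x * (a x * u x) := by
  obtain ⟨ha0, A, hA, hA'⟩ := ha
  obtain ⟨hu0, U, hU, hU'⟩ := hu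
  obtain ⟨hv0, V, hV, hV'⟩ := hv
  have hmul := Primrec.nat_mul.to_comp
  have hadd := Primrec.nat_add.to_comp
  have hsub := Primrec.nat_sub.to_comp
  refine ⟨fun p => decide (p.2 * (V p + 2) < c p.1 * ((A p - 2) * (U p - 2))), ?_, ?_⟩
  · exact (Primrec.nat_lt.decide.to_comp).comp
      (hmul.comp Computable.snd (hadd.comp hV (Computable.const 2)))
      (hmul.comp (hc.comp Computable.fst) (hmul.comp (hsub.comp hA (Computable.const 2))
        (hsub.comp hU (Computable.const 2))))
  intro x
  simp only [decide_eq_true_eq]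
  have hle : ∀ (k : ℕ) (B : β × ℕ → ℕ) (w : ℝ), 0 ≤ w → |(B (x, k) : ℝ) - k * w| ≤ 2 →
      (((B (x, k) - 2 : ℕ)) : ℝ) ≤ k * w := by
    intro k B w hw h
    rw [abs_le] at h
    rcases le_total (B (x, k)) 2 with h2 | h2
    · rw [Nat.sub_eq_zero_of_le h2]; push_cast; positivity
    · push_cast [Nat.cast_sub h2]; linarith
  have hge : ∀ (k : ℕ) (B : β × ℕ → ℕ) (w : ℝ), |(B (x, k) : ℝ) - k * w| ≤ 2 →
      k * w - 4 ≤ (((B (x, k) - 2 : ℕ)) : ℝ) := by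
    intro k B w h
    rw [abs_le] at h
    have : (B (x, k) : ℝ) ≤ ((B (x, k) - 2 : ℕ) : ℝ) + 2 := by
      exact_mod_cast (by omega : B (x, k) ≤ B (x, k) - 2 + 2)
    linarith
  constructor
  · rintro ⟨k, hk⟩
    have hk' : (k : ℝ) * (V (x, k) + 2) <
        c x * (((A (x, k) - 2 : ℕ) : ℝ) * ((U (x, k) - 2 : ℕ) : ℝ)) := by exact_mod_cast hk
    have h1 := hle k A _ (ha0 x) (hA' x k)
    have h2 := hle k U _ (hu0 x) (hU' x k)
    have h3 := (abs_le.1 (hV' x k)).1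
    have h4 : (c x : ℝ) * (((A (x, k) - 2 : ℕ) : ℝ) * ((U (x, k) - 2 : ℕ) : ℝ)) ≤
        c x * ((k * a x) * (k * u x)) := by
      have := ha0 x
      gcongr
    have h5 : (k : ℝ) * (k * v x) ≤ k * (V (x, k) + 2) := by gcongr; linarith
    have h6 : (k : ℝ) ^ 2 * v x < (k : ℝ) ^ 2 * (c x * (a x * u x)) := by
      calc _ = (k : ℝ) * (k * v x) := by ring
        _ < _ := h5.trans_lt (hk'.trans_le h4)
        _ = _ := by ring
    exact lt_of_mul_lt_mul_left h6 (by positivity)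
  · intro h
    -- for large `k` the errors, of order `k`, are dominated by the gap, of order `k ^ 2`
    have ht : Tendsto (fun k : ℕ => (c x : ℝ) * ((a x - 4 / k) * (u x - 4 / k)) - (v x + 4 / k))
        atTop (nhds (c x * ((a x - 0) * (u x - 0)) - (v x + 0))) := by
      have h4 := tendsto_const_div_atTop_nhds_zero_nat (4 : ℝ)
      exact (((tendsto_const_nhds.sub h4).mul (tendsto_const_nhds.sub h4)).const_mul _).sub
        (tendsto_const_nhds.add h4)
    by_cases hz : a x * u x = 0
    · rw [hz, mul_zero] at h; exact absurd h (not_lt.2 (hv0 x))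
    have hapos : 0 < a x := lt_of_le_of_ne (ha0 x) fun h => hz (by rw [← h, zero_mul])
    have hupos : 0 < u x := lt_of_le_of_ne (hu0 x) fun h => hz (by rw [← h, mul_zero])
    have e1 := ht.eventually (lt_mem_nhds (show (0:ℝ) < _ by simpa using h))
    have h4 := tendsto_const_div_atTop_nhds_zero_nat (4 : ℝ)
    have e2 := h4.eventually (gt_mem_nhds hapos)
    have e3 := h4.eventually (gt_mem_nhds hupos)
    obtain ⟨k, ⟨⟨hk1, hk2⟩, hk3⟩, hk4⟩ := (((e1.and e2).and e3).and (eventually_gt_atTop 0)).exists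
    refine ⟨k, ?_⟩
    have hkp : (0 : ℝ) < k := by exact_mod_cast hk4
    have g1 := hge k A _ (hA' x k)
    have g2 := hge k U _ (hU' x k)
    have g3 := (abs_le.1 (hV' x k)).2
    have e : ∀ w : ℝ, (k : ℝ) * (w - 4 / k) = k * w - 4 := fun w => by field_simp
    have p1 : 0 ≤ k * a x - 4 := by rw [← e]; exact mul_nonneg hkp.le (by linarith)
    have p2 : 0 ≤ k * u x - 4 := by rw [← e]; exact mul_nonneg hkp.le (by linarith)
    have : (k : ℝ) * (V (x, k) + 2) <
        c x * (((A (x, k) - 2 : ℕ) : ℝ) * ((U (x, k) - 2 : ℕ) : ℝ)) := by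
      calc (k : ℝ) * (V (x, k) + 2) ≤ k * (k * v x + 4) :=
          mul_le_mul_of_nonneg_left (by linarith) hkp.le
        _ < c x * ((k * a x - 4) * (k * u x - 4)) := by
          have := mul_pos (pow_pos hkp 2) hk1
          have h7 : (k : ℝ) ^ 2 * ((c x : ℝ) * ((a x - 4 / k) * (u x - 4 / k)) - (v x + 4 / k))
            = c x * ((k * (a x - 4 / k)) * (k * (u x - 4 / k))) - k * (k * v x + 4) := by
            field_simp
          rw [h7, e, e] at this
          linarith
        _ ≤ _ := by gcongr
    exact_mod_cast this

/-! ### Cylinders and Ville's inequality -/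

lemma length_seqTake (ω : Seq) (n : ℕ) : (seqTake ω n).length = n := by simp [seqTake]

lemma mem_cyl_iff (x : S) (ω : Seq) : ω ∈ cyl x ↔ x = seqTake ω x.length := by
  simp only [cyl, PrefixSeq, mem_ofPred_eq]
  constructor
  · intro h
    refine List.ext_getElem (by simp [seqTake]) fun i h1 h2 => ?_
    simpa [seqTake] using h ⟨i, h1⟩
  · intro h i
    have : x.get i = x[(i : ℕ)] := rfl
    rw [this, List.getElem_of_eq h]
    simp [seqTake]

lemma mem_cyl_seqTake (ω : Seq) (n : ℕ) : ω ∈ cyl (seqTake ω n) := by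
  rw [mem_cyl_iff, length_seqTake]

lemma take_seqTake (ω : Seq) {m n : ℕ} (h : m ≤ n) : (seqTake ω n).take m = seqTake ω m := by
  refine List.ext_getElem (by simp [seqTake, h]) fun i h1 h2 => ?_
  simp [seqTake]

lemma cyl_subset_cyl_take (x : S) (m : ℕ) : cyl x ⊆ cyl (x.take m) := by
  intro ω h
  rw [mem_cyl_iff] at h ⊢
  rcases le_total m x.length with hm | hm
  · conv_lhs => rw [h, take_seqTake _ hm]
    rw [List.length_take, min_eq_left hm]
  · rwa [List.take_of_length_le hm]

lemma measurableSet_cyl (x : S) : MeasurableSet (cyl x) := by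
  have : cyl x = ⋂ i : Fin x.length, (fun ω : Seq => ω i) ⁻¹' {x.get i} := by
    ext ω; simp [cyl, PrefixSeq, eq_comm]
  rw [this]
  exact MeasurableSet.iInter fun i => measurable_pi_apply _ (measurableSet_singleton _)

/-- A form of Ville's maximal inequality: if `P ≤ c * Q` on the cylinders of all strings of `W`,
then also on their union, since the minimal strings of `W` give a disjoint decomposition of it. -/
lemma measure_biUnion_cyl_le (P Q : Measure Seq) (c : ℝ≥0∞) (W : Set S)
    (h : ∀ x ∈ W, P (cyl x) ≤ c * Q (cyl x)) :
    P (⋃ x ∈ W, cyl x) ≤ c * Q (⋃ x ∈ W, cyl x) := by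
  classical
  let V : Set S := {x ∈ W | ∀ m < x.length, x.take m ∉ W}
  have hVW : ⋃ x ∈ W, cyl x = ⋃ x ∈ V, cyl x := by
    refine subset_antisymm ?_ (biUnion_subset_biUnion_left fun x hx => hx.1)
    intro ω hω
    simp only [mem_iUnion] at hω
    obtain ⟨x, hx, hωx⟩ := hω
    have hex : ∃ m, seqTake ω m ∈ W := ⟨x.length, by rwa [← (mem_cyl_iff x ω).1 hωx]⟩
    simp only [mem_iUnion]
    refine ⟨seqTake ω (Nat.find hex), ⟨Nat.find_spec hex, fun m hm => ?_⟩, mem_cyl_seqTake _ _⟩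
    rw [length_seqTake] at hm
    rw [take_seqTake _ hm.le]
    exact Nat.find_min hex hm
  have hdisj : V.PairwiseDisjoint cyl := by
    intro x hx y hy hxy
    refine Set.disjoint_left.2 fun ω h1 h2 => ?_
    rw [mem_cyl_iff] at h1 h2
    rcases lt_trichotomy x.length y.length with hl | hl | hl
    · refine hy.2 _ hl ?_
      rw [h2, take_seqTake _ hl.le, ← h1]
      exact hx.1
    · exact hxy (by rw [h1, h2, hl])
    · refine hx.2 _ hl ?_
      rw [h1, take_seqTake _ hl.le, ← h2]
      exact hy.1
  have hc : V.Countable := Set.to_countable V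
  rw [hVW, measure_biUnion hc hdisj fun x _ => measurableSet_cyl x,
    measure_biUnion hc hdisj fun x _ => measurableSet_cyl x, ← ENNReal.tsum_mul_left]
  exact ENNReal.tsum_le_tsum fun x => h x x.2.1

/-! ### Random sequences and effective Borel–Cantelli -/

lemma tsum_quarter_lt (n : ℕ) : ∑' i : ℕ, (4⁻¹ : ℝ≥0∞) ^ (n + 1 + i) < 2⁻¹ ^ n := by
  have h4 : (4⁻¹ : ℝ≥0∞) = 2⁻¹ * 2⁻¹ := by
    rw [← ENNReal.mul_inv (by simp) (by simp)]; norm_num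
  have hle : (4⁻¹ : ℝ≥0∞) ≤ 2⁻¹ := ENNReal.inv_le_inv.2 (by norm_num)
  have hhalf : (2⁻¹ : ℝ≥0∞) ≤ 1 := ENNReal.inv_le_one.2 (by norm_num)
  calc ∑' i : ℕ, (4⁻¹ : ℝ≥0∞) ^ (n + 1 + i) = 4⁻¹ ^ (n + 1) * ∑' i : ℕ, (4⁻¹ : ℝ≥0∞) ^ i := by
        rw [← ENNReal.tsum_mul_left]; simp_rw [pow_add]
    _ ≤ 4⁻¹ ^ (n + 1) * ∑' i : ℕ, (2⁻¹ : ℝ≥0∞) ^ i := by gcongr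
    _ = 4⁻¹ ^ (n + 1) * 2 := by rw [ENNReal.tsum_geometric, ENNReal.one_sub_inv_two, inv_inv]
    _ = 2⁻¹ ^ (n + 1) * (2⁻¹ ^ n * (2⁻¹ * 2)) := by rw [h4, mul_pow]; ring
    _ = 2⁻¹ ^ (n + 1) * 2⁻¹ ^ n := by
        rw [ENNReal.inv_mul_cancel (by simp) (by simp), mul_one]
    _ ≤ 2⁻¹ ^ (n + 1) * 1 := by gcongr; exact pow_le_one₀ (by simp) hhalf
    _ = 2⁻¹ ^ n / 2 := by rw [mul_one, pow_succ, div_eq_mul_inv]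
    _ < 2⁻¹ ^ n := ENNReal.half_lt_self (by simp) (by simp)

/-- Effective Borel–Cantelli: if the sets `W j` of strings are uniformly recursively enumerable
(by `D`) and cover sets of `P`-measure at most `4 ^ (-j)`, then a `P`-random sequence leaves all
but finitely many of these sets. The unions over `j > n` form a Martin-Löf test. -/
lemma eventually_notMem_of_random {P : Measure Seq} {ω : Seq} (hω : Random1 P ω)
    {D : (ℕ × S) × ℕ → Bool} (hD : Computable D)
    (hP : ∀ j, P (⋃ x ∈ {x : S | ∃ k, D ((j, x), k) = true}, cyl x) ≤ 4⁻¹ ^ j) :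
    ∃ J, ∀ j ≥ J, ∀ x, (∃ k, D ((j, x), k) = true) → ω ∉ cyl x := by
  let U : Set (ℕ × S) := {p | ∃ j k, p.1 < j ∧ D ((j, p.2), k) = true}
  have hmem : ∀ n ω', ω' ∈ testUnion cyl U n ↔
      ∃ j, n < j ∧ ∃ x, (∃ k, D ((j, x), k) = true) ∧ ω' ∈ cyl x := by
    intro n ω'
    simp only [testUnion, U, mem_iUnion, mem_ofPred_eq]
    constructor
    · rintro ⟨x, ⟨j, k, h1, h2⟩, h3⟩; exact ⟨j, h1, x, ⟨k, h2⟩, h3⟩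
    · rintro ⟨j, h1, x, ⟨k, h2⟩, h3⟩; exact ⟨x, ⟨j, k, h1, h2⟩, h3⟩
  have hU : IsMLTest cyl P U := by
    refine ⟨?_, ?_, ?_⟩
    · let g : (ℕ × S) × (ℕ × ℕ) → Bool := fun q =>
        decide (q.1.1 < q.2.1) && D ((q.2.1, q.1.2), q.2.2)
      have hg : Computable g := by
        refine Primrec.and.to_comp.comp ?_ (hD.comp ?_)
        · exact (Primrec.nat_lt.decide.to_comp).comp (Computable.fst.comp Computable.fst)
            (Computable.fst.comp Computable.snd)
        · exact ((Computable.fst.comp Computable.snd).pair (Computable.snd.comp Computable.fst)).pair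
            (Computable.snd.comp Computable.snd)
      refine ⟨fun m => (Encodable.decode (α := (ℕ × S) × (ℕ × ℕ)) m).bind fun q =>
        bif g q then some q.1 else none, ?_, ?_⟩
      · refine Computable.option_bind Computable.decode ?_
        exact Computable.cond (hg.comp Computable.snd)
          (Computable.option_some.comp (Computable.fst.comp Computable.snd)) (Computable.const none)
      · ext p
        simp only [U, mem_ofPred_eq]
        constructor
        · rintro ⟨j, k, h1, h2⟩
          refine ⟨Encodable.encode (p, (j, k)), ?_⟩
          rw [Encodable.encodek]
          simp [g, h1, h2]
        · rintro ⟨m, hm⟩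
          rw [Option.bind_eq_some_iff] at hm
          obtain ⟨q, -, hq⟩ := hm
          cases hgq : g q with
          | false => simp [hgq] at hq
          | true =>
            simp only [hgq, cond_true, Option.some.injEq] at hq
            subst hq
            simp only [g, Bool.and_eq_true, decide_eq_true_eq] at hgq
            exact ⟨_, _, hgq.1, hgq.2⟩
    · intro n ω' h
      rw [hmem] at h ⊢
      obtain ⟨j, hj, h⟩ := h
      exact ⟨j, by omega, h⟩
    · intro n
      refine lt_of_le_of_lt ?_ (tsum_quarter_lt n)
      have hsub : testUnion cyl U n ⊆
          ⋃ i : ℕ, ⋃ x ∈ {x : S | ∃ k, D ((n + 1 + i, x), k) = true}, cyl x := by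
        intro ω' h
        rw [hmem] at h
        obtain ⟨j, hj, x, hx, hωx⟩ := h
        obtain ⟨i, rfl⟩ := Nat.exists_eq_add_of_le (Nat.succ_le_of_lt hj)
        exact mem_iUnion.2 ⟨i, mem_biUnion (show x ∈ {x : S | _} from hx) hωx⟩
      exact (measure_mono hsub).trans ((measure_iUnion_le _).trans
        (ENNReal.tsum_le_tsum fun i => hP _))
  by_contra! hcon
  refine hω U hU (mem_iInter.2 fun n => (hmem n ω).2 ?_)
  obtain ⟨j, hj, x, hx, hωx⟩ := hcon (n + 1)
  exact ⟨j, by omega, x, hx, hωx⟩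

/-- A random sequence lies in no null cylinder. -/
lemma measure_cyl_ne_zero_of_random {P : Measure Seq} {ω : Seq} (hω : Random1 P ω) (m : ℕ) :
    P (cyl (seqTake ω m)) ≠ 0 := by
  intro h0
  have hD : Computable fun q : (ℕ × S) × ℕ => decide (q.1.2 = seqTake ω m) :=
    (PrimrecRel.decide Primrec.eq).to_comp.comp (Computable.snd.comp Computable.fst)
      (Computable.const (seqTake ω m))
  obtain ⟨J, hJ⟩ := eventually_notMem_of_random hω hD fun j => by simp [h0]
  exact hJ J le_rfl (seqTake ω m) ⟨0, by simp⟩ (mem_cyl_seqTake ω m)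

/-! ### The tail of the weights -/

/-- A computable sequence of weights with the computable sum `1` has computable tails: searching
for `M` whose partial sum provably exceeds `1 - 8 ^ (-j)` always succeeds. -/
lemma exists_tail_modulus {α : ℕ → ℝ} (hα : CReal α) (hsum : HasSum α 1) :
    ∃ N : ℕ → ℕ, Computable N ∧ ∀ j, ∑' i, α (N j + i) ≤ (8⁻¹ : ℝ) ^ j := by
  obtain ⟨h0, b, hb, hb'⟩ := hα
  have hs : Computable fun p : ℕ × ℕ => ∑ n ∈ Finset.range p.1, b (n, p.2) := by
    have hstep : Computable₂ fun (p : ℕ × ℕ) (q : ℕ × ℕ) => q.2 + b (q.1, p.2) :=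
      Primrec.nat_add.to_comp.comp (Computable.snd.comp Computable.snd)
        (hb.comp ((Computable.fst.comp Computable.snd).pair (Computable.snd.comp Computable.fst)))
    refine (Computable.nat_rec Computable.fst (Computable.const 0) hstep).of_eq fun p => ?_
    induction p.1 with
    | zero => simp
    | succ n ih => simp only [Finset.sum_range_succ, ← ih]
  have herr : ∀ M k : ℕ, |(∑ n ∈ Finset.range M, (b (n, k) : ℝ)) -
      k * ∑ n ∈ Finset.range M, α n| ≤ 2 * M := by
    intro M k
    rw [Finset.mul_sum, ← Finset.sum_sub_distrib]
    refine (Finset.abs_sum_le_sum_abs _ _).trans ((Finset.sum_le_sum fun n _ => hb' n k).trans ?_)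
    simp [mul_comm]
  -- `t` codes `(M, k)`; the inequality certifies that the first `M` weights sum to `≥ 1 - 8 ^ (-j)`
  let R : ℕ → ℕ → Prop := fun j t => 0 < t.unpair.2 ∧
    8 ^ j * (t.unpair.2 + 2 * t.unpair.1) ≤
      8 ^ j * (∑ n ∈ Finset.range t.unpair.1, b (n, t.unpair.2)) + t.unpair.2
  have hRdec : DecidableRel R := fun j t => by unfold R; infer_instance
  have hpow : Primrec fun j : ℕ => 8 ^ j := by
    refine (Primrec.nat_rec₁ (f := fun _ y => y * 8) 1
      (Primrec.nat_mul.comp Primrec.snd (Primrec.const 8))).of_eq fun j => ?_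
    induction j with
    | zero => rfl
    | succ j ih => rw [pow_succ, ← ih]
  have hR : ComputablePred fun p : ℕ × ℕ => R p.1 p.2 := by
    have hu : Computable fun p : ℕ × ℕ => p.2.unpair :=
      Primrec.unpair.to_comp.comp Computable.snd
    have hu1 := Computable.fst.comp hu
    have hu2 := Computable.snd.comp hu
    have h8 : Computable fun p : ℕ × ℕ => 8 ^ p.1 := hpow.to_comp.comp Computable.fst
    have hmul := Primrec.nat_mul.to_comp
    have hadd := Primrec.nat_add.to_comp
    have c1 : Computable fun p : ℕ × ℕ => decide (0 < p.2.unpair.2) :=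
      (Primrec.nat_lt.decide.to_comp).comp (Computable.const 0) hu2
    have c2 : Computable fun p : ℕ × ℕ => decide
        (8 ^ p.1 * (p.2.unpair.2 + 2 * p.2.unpair.1) ≤
        8 ^ p.1 * (∑ n ∈ Finset.range p.2.unpair.1, b (n, p.2.unpair.2)) + p.2.unpair.2) :=
      (Primrec.nat_le.decide.to_comp).comp
        (hmul.comp h8 (hadd.comp hu2 (hmul.comp (Computable.const 2) hu1)))
        (hadd.comp (hmul.comp h8 (hs.comp hu)) hu2)
    refine Computable.computablePred ((Primrec.and.to_comp.comp c1 c2).of_eq fun p => ?_)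
    simp only [R, Bool.decide_and]
  have hex : ∀ j, ∃ t, R j t := by
    intro j
    have h8 : (0 : ℝ) < 8 ^ j := by positivity
    obtain ⟨M, hM⟩ := (hsum.tendsto_sum_nat.eventually
      (lt_mem_nhds (show 1 - (8 ^ j : ℝ)⁻¹ < 1 by simp))).exists
    set A := ∑ n ∈ Finset.range M, α n
    have hgap : 0 < 8 ^ j * A + 1 - 8 ^ j := by
      have := mul_lt_mul_of_pos_left hM h8
      rw [mul_sub, mul_inv_cancel₀ h8.ne'] at this
      linarith
    obtain ⟨k, hk⟩ := exists_nat_gt ((8 ^ j * (4 * M)) / (8 ^ j * A + 1 - 8 ^ j))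
    have hk0 : (0 : ℝ) < k := lt_of_le_of_lt (by positivity) hk
    rw [div_lt_iff₀ hgap] at hk
    refine ⟨Nat.pair M k, ?_⟩
    simp only [R, Nat.unpair_pair]
    refine ⟨by exact_mod_cast hk0, ?_⟩
    have h1 := (abs_le.1 (herr M k)).1
    have h2 : (8 : ℝ) ^ j * (k * A - 2 * M) ≤
        8 ^ j * ∑ n ∈ Finset.range M, (b (n, k) : ℝ) := by gcongr; linarith
    have : (8 : ℝ) ^ j * (k + 2 * M) ≤ 8 ^ j * (∑ n ∈ Finset.range M, (b (n, k) : ℝ)) + k := by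
      nlinarith
    exact_mod_cast this
  refine ⟨fun j => (Nat.find (hex j)).unpair.1,
    Computable.fst.comp (Primrec.unpair.to_comp.comp (Computable.find hR hex)), fun j => ?_⟩
  obtain ⟨hk, hle⟩ := Nat.find_spec (hex j)
  set t := Nat.find (hex j)
  set M := t.unpair.1
  set k := t.unpair.2
  have hk' : (0 : ℝ) < k := by exact_mod_cast hk
  have h8 : (0 : ℝ) < 8 ^ j := by positivity
  have hle' : (8 : ℝ) ^ j * (k + 2 * M) ≤
      8 ^ j * (∑ n ∈ Finset.range M, (b (n, k) : ℝ)) + k := by exact_mod_cast hle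
  have h1 := (abs_le.1 (herr M k)).2
  have h2 := hsum.summable.sum_add_tsum_nat_add M
  rw [hsum.tsum_eq] at h2
  have h3 : ∑' i, α (M + i) = 1 - ∑ n ∈ Finset.range M, α n := by
    simp_rw [add_comm M]; linarith
  rw [h3, inv_pow]
  set A := ∑ n ∈ Finset.range M, α n
  have h4 : (8 : ℝ) ^ j * (∑ n ∈ Finset.range M, (b (n, k) : ℝ)) ≤ 8 ^ j * (k * A + 2 * M) := by
    gcongr; linarith
  have h5 : (k : ℝ) * (8 ^ j * (1 - A)) ≤ k * 1 := by nlinarith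
  have h6 := le_of_mul_le_mul_left h5 hk'
  rw [← one_div, le_div_iff₀ h8]
  linarith

/-! ### Comparison of likelihoods -/

lemma computable_two_pow : Computable fun j : ℕ => 2 ^ j := by
  have : Primrec fun j : ℕ => 2 ^ j := by
    refine (Primrec.nat_rec₁ (f := fun _ y => y * 2) 1
      (Primrec.nat_mul.comp Primrec.snd (Primrec.const 2))).of_eq fun j => ?_
    induction j with
    | zero => rfl
    | succ j ih => rw [pow_succ, ← ih]
  exact this.to_comp

lemma measure_cyl_le_of_toReal {P Q : Measure Seq} [IsProbabilityMeasure P]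
    [IsProbabilityMeasure Q] {x : S} {b : ℝ} (hb : 0 ≤ b)
    (h : (P (cyl x)).toReal ≤ b * (Q (cyl x)).toReal) :
    P (cyl x) ≤ ENNReal.ofReal b * Q (cyl x) := by
  rw [← ENNReal.ofReal_toReal (measure_ne_top P (cyl x)),
    ← ENNReal.ofReal_toReal (measure_ne_top Q (cyl x)), ← ENNReal.ofReal_mul hb]
  exact ENNReal.ofReal_le_ofReal h

/-- Along a `P_{n*}`-random sequence, the weighted likelihoods of all models beyond a suitable
index are uniformly negligible compared to `P_{n*}`. For a single `i`, the strings `x` with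
`P_{n*}(x) < 2 ^ j α(N j + i) P_{N j + i}(x)` cover measure at most `2 ^ j α(N j + i)`, and these
bounds sum to at most `2 ^ j 8 ^ (-j) = 4 ^ (-j)`. -/
lemma weighted_likelihood_le_of_ge {Pn : ℕ → Measure Seq} [∀ n, IsProbabilityMeasure (Pn n)]
    (hu : CReal fun p : ℕ × S => (Pn p.1 (cyl p.2)).toReal)
    {α : ℕ → ℝ} (hα : CReal α) (hsum : HasSum α 1) {nstar : ℕ} {ω : Seq}
    (h1 : Random1 (Pn nstar) ω) :
    ∃ N : ℕ → ℕ, ∃ J, ∀ j ≥ J, ∀ n ≥ N j, ∀ m,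
      2 ^ j * (α n * (Pn n (cyl (seqTake ω m))).toReal) ≤
        (Pn nstar (cyl (seqTake ω m))).toReal := by
  obtain ⟨N, hN, hNα⟩ := exists_tail_modulus hα hsum
  have hj : Computable fun p : (ℕ × S) × ℕ => p.1.1 := Computable.fst.comp Computable.fst
  have hx : Computable fun p : (ℕ × S) × ℕ => p.1.2 := Computable.snd.comp Computable.fst
  have hn : Computable fun p : (ℕ × S) × ℕ => N p.1.1 + p.2 :=
    Primrec.nat_add.to_comp.comp (hN.comp hj) Computable.snd
  obtain ⟨D, hD, hD'⟩ := CReal.lt_re (hα.comp hn) (hu.comp (hn.pair hx))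
    (hu.comp ((Computable.const nstar).pair hx)) (computable_two_pow.comp hj)
  have hE : Computable fun q : (ℕ × S) × ℕ => D ((q.1, q.2.unpair.1), q.2.unpair.2) := by
    have hu : Computable fun q : (ℕ × S) × ℕ => q.2.unpair :=
      Primrec.unpair.to_comp.comp Computable.snd
    exact hD.comp ((Computable.fst.pair (Computable.fst.comp hu)).pair (Computable.snd.comp hu))
  have hE' : ∀ j x, (∃ k : ℕ, D (((j, x), k.unpair.1), k.unpair.2) = true) ↔
      ∃ i, (Pn nstar (cyl x)).toReal < 2 ^ j * (α (N j + i) * (Pn (N j + i) (cyl x)).toReal) := by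
    intro j x
    constructor
    · rintro ⟨k, hk⟩
      have := (hD' ((j, x), k.unpair.1)).1 ⟨_, hk⟩
      exact ⟨k.unpair.1, by simpa using this⟩
    · rintro ⟨i, hi⟩
      obtain ⟨k, hk⟩ := (hD' ((j, x), i)).2 (by simpa using hi)
      exact ⟨Nat.pair i k, by simpa using hk⟩
  obtain ⟨J, hJ⟩ := eventually_notMem_of_random h1 hE fun j => by
    let W : ℕ → Set S := fun i => {x | (Pn nstar (cyl x)).toReal <
      2 ^ j * (α (N j + i) * (Pn (N j + i) (cyl x)).toReal)}
    have hsub : (⋃ x ∈ {x : S | ∃ k : ℕ, D (((j, x), k.unpair.1), k.unpair.2) = true}, cyl x) ⊆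
        ⋃ i, ⋃ x ∈ W i, cyl x := by
      intro ω' h
      obtain ⟨x, hx, hω'⟩ := mem_iUnion₂.1 h
      obtain ⟨i, hi⟩ := (hE' j x).1 hx
      exact mem_iUnion.2 ⟨i, mem_biUnion (show x ∈ W i from hi) hω'⟩
    have hnn : ∀ i, 0 ≤ 2 ^ j * α (N j + i) := fun i => mul_nonneg (by positivity) (hα.1 _)
    have hW : ∀ i, Pn nstar (⋃ x ∈ W i, cyl x) ≤ ENNReal.ofReal (2 ^ j * α (N j + i)) := by
      intro i
      refine (measure_biUnion_cyl_le (Pn nstar) (Pn (N j + i))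
        (ENNReal.ofReal (2 ^ j * α (N j + i))) (W i) fun x hx => ?_).trans ?_
      · exact measure_cyl_le_of_toReal (hnn i) (by rw [mul_assoc]; exact le_of_lt hx)
      · exact mul_le_of_le_one_right' prob_le_one
    have hs : Summable fun i => 2 ^ j * α (N j + i) := by
      simp_rw [add_comm (N j)]
      exact ((summable_nat_add_iff (N j)).2 hsum.summable).mul_left _
    calc Pn nstar (⋃ x ∈ {x : S | ∃ k : ℕ, D (((j, x), k.unpair.1), k.unpair.2) = true}, cyl x)
        ≤ ∑' i, Pn nstar (⋃ x ∈ W i, cyl x) := (measure_mono hsub).trans (measure_iUnion_le _)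
      _ ≤ ∑' i, ENNReal.ofReal (2 ^ j * α (N j + i)) := ENNReal.tsum_le_tsum hW
      _ = ENNReal.ofReal (2 ^ j * ∑' i, α (N j + i)) := by
          rw [← ENNReal.ofReal_tsum_of_nonneg hnn hs, tsum_mul_left]
      _ ≤ ENNReal.ofReal ((4⁻¹ : ℝ) ^ j) := by
          refine ENNReal.ofReal_le_ofReal ?_
          calc (2 : ℝ) ^ j * ∑' i, α (N j + i) ≤ 2 ^ j * (8⁻¹) ^ j := by gcongr; exact hNα j
            _ = 4⁻¹ ^ j := by rw [← mul_pow]; norm_num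
      _ = 4⁻¹ ^ j := by
          rw [ENNReal.ofReal_pow (by norm_num), ENNReal.ofReal_inv_of_pos (by norm_num)]
          norm_num
  refine ⟨N, J, fun j hj n hn m => ?_⟩
  by_contra! hlt
  obtain ⟨i, rfl⟩ := Nat.exists_eq_add_of_le hn
  exact hJ j hj (seqTake ω m) ((hE' j _).2 ⟨i, hlt⟩) (mem_cyl_seqTake ω m)

/-- If `ω` is random for `P` but not for `Q`, then `Q(x) / P(x) → 0` along the prefixes `x` of
`ω`. Let `U` be a `Q`-test that captures `ω`. The strings `x` that extend a member of `U_{3j}` and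
satisfy `P(x) < 2 ^ j Q(x)` cover `P`-measure at most `2 ^ j 2 ^ (-3j) = 4 ^ (-j)`, so for large `j`
no prefix of `ω` is among them, although all long prefixes of `ω` extend a member of `U_{3j}`. -/
lemma likelihood_ratio_le_of_not_random {P Q : Measure Seq} [IsProbabilityMeasure P] [IsProbabilityMeasure Q]
    (hP : CReal fun x : S => (P (cyl x)).toReal) (hQ : CReal fun x : S => (Q (cyl x)).toReal)
    {ω : Seq} (h1 : Random1 P ω) (h2 : ¬ Random1 Q ω) :
    ∃ J, ∀ j ≥ J, ∀ᶠ m in atTop,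
      2 ^ j * (Q (cyl (seqTake ω m))).toReal ≤ (P (cyl (seqTake ω m))).toReal := by
  simp only [Random1, MLRandom, not_forall, not_not] at h2
  obtain ⟨U, ⟨⟨f, hf, hfU⟩, -, hUQ⟩, hωU⟩ := h2
  have hx : Computable fun p : ℕ × S => p.2 := Computable.snd
  obtain ⟨D, hD, hD'⟩ := CReal.lt_re (CReal.one.comp (Computable.id (α := ℕ × S))) (hQ.comp hx)
    (hP.comp hx) (computable_two_pow.comp Computable.fst)
  -- the witness codes a triple: a stage of the enumeration of `U`, the length of the prefix of `x`
  -- that lies in `U_{3j}`, and a precision certifying the inequality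
  let E : (ℕ × S) × ℕ → Bool := fun q =>
    decide (f q.2.unpair.1 = some (3 * q.1.1, q.1.2.take q.2.unpair.2.unpair.1)) &&
      D (q.1, q.2.unpair.2.unpair.2)
  have hE : Computable E := by
    have hu : Computable fun q : (ℕ × S) × ℕ => q.2.unpair :=
      Primrec.unpair.to_comp.comp Computable.snd
    have hv : Computable fun q : (ℕ × S) × ℕ => q.2.unpair.2.unpair :=
      Primrec.unpair.to_comp.comp (Computable.snd.comp hu)
    refine Primrec.and.to_comp.comp ((PrimrecRel.decide Primrec.eq).to_comp.comp
      (hf.comp (Computable.fst.comp hu)) (Computable.option_some.comp (Computable.pair ?_ ?_)))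
      (hD.comp (Computable.fst.pair (Computable.snd.comp hv)))
    · exact Primrec.nat_mul.to_comp.comp (Computable.const 3) (Computable.fst.comp Computable.fst)
    · exact Primrec.list_take.to_comp.comp (Computable.fst.comp hv)
        (Computable.snd.comp Computable.fst)
  have hE' : ∀ j x, (∃ k, E ((j, x), k) = true) ↔
      (∃ l, (3 * j, x.take l) ∈ U) ∧ (P (cyl x)).toReal < 2 ^ j * (Q (cyl x)).toReal := by
    intro j x
    have hDx := hD' (j, x)
    simp only [one_mul, Nat.cast_pow, Nat.cast_ofNat] at hDx
    rw [← hDx, hfU]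
    simp only [E, Bool.and_eq_true, decide_eq_true_eq]
    constructor
    · rintro ⟨k, hk1, hk2⟩
      exact ⟨⟨_, _, hk1⟩, _, hk2⟩
    · rintro ⟨⟨l, t, hlt⟩, k, hk⟩
      exact ⟨Nat.pair t (Nat.pair l k), by simpa using hlt, by simpa using hk⟩
  obtain ⟨J, hJ⟩ := eventually_notMem_of_random h1 hE fun j => by
    refine (measure_biUnion_cyl_le P Q (ENNReal.ofReal (2 ^ j)) _ fun x hx => ?_).trans ?_
    · exact measure_cyl_le_of_toReal (by positivity) ((hE' j x).1 hx).2.le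
    · have hsub : (⋃ x ∈ {x : S | ∃ k, E ((j, x), k) = true}, cyl x) ⊆
          testUnion cyl U (3 * j) := by
        intro ω' h
        obtain ⟨x, hx, hω'⟩ := mem_iUnion₂.1 h
        obtain ⟨⟨l, hl⟩, -⟩ := (hE' j x).1 hx
        exact mem_biUnion (show x.take l ∈ {x | (3 * j, x) ∈ U} from hl)
          (cyl_subset_cyl_take x l hω')
      calc ENNReal.ofReal (2 ^ j) * Q (⋃ x ∈ {x : S | ∃ k, E ((j, x), k) = true}, cyl x)
          ≤ 2 ^ j * 2⁻¹ ^ (3 * j) := by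
            rw [ENNReal.ofReal_pow (by norm_num), ENNReal.ofReal_ofNat]
            gcongr
            exact (measure_mono hsub).trans (hUQ _).le
        _ = 4⁻¹ ^ j := by
            rw [pow_mul, ← mul_pow]
            congr 1
            have h4 : (4 : ℝ≥0∞)⁻¹ = 2⁻¹ ^ 2 := by
              rw [ENNReal.inv_pow.symm]; norm_num
            rw [h4, pow_succ', ← mul_assoc, ENNReal.mul_inv_cancel (by norm_num) (by norm_num),
              one_mul]
  refine ⟨J, fun j hj => ?_⟩
  obtain ⟨y, hy, hωy⟩ := mem_iUnion₂.1 (mem_iInter.1 hωU (3 * j))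
  filter_upwards [eventually_ge_atTop y.length] with m hm
  by_contra! hlt
  refine hJ j hj (seqTake ω m) ((hE' j _).2 ⟨⟨y.length, ?_⟩, hlt⟩) (mem_cyl_seqTake ω m)
  rw [take_seqTake ω hm, ← (mem_cyl_iff y ω).1 hωy]
  exact hy

/-- Corollary 4, consistency of MDL: if ω is random for P_{n*} and random
for no other P_n, then any selector n̂(x) maximizing n ↦ α(n)P_n(x) converges to n*
along prefixes of ω. -/
theorem mdl_consistency (Pn : ℕ → Measure Seq) (hPn : UnifComputableFam Pn)
    (α : ℕ → ℝ) (hα : ComputableRealSeq α) (hpos : ∀ n, 0 < α n)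
    (hsum : (∑' n, α n) = 1) (nstar : ℕ) (ω : Seq)
    (h1 : Random1 (Pn nstar) ω) (h2 : ∀ n, n ≠ nstar → ¬ Random1 (Pn n) ω)
    (nhat : S → ℕ)
    (hmax : ∀ (x : S) (n : ℕ),
      α n * ((Pn n) (cyl x)).toReal ≤ α (nhat x) * ((Pn (nhat x)) (cyl x)).toReal) :
    ∀ᶠ m in atTop, nhat (seqTake ω m) = nstar := by
  obtain ⟨hprob, A, hA, hA'⟩ := hPn
  have hu : CReal fun p : ℕ × S => (Pn p.1 (cyl p.2)).toReal :=
    CReal.of_rat (fun _ => ENNReal.toReal_nonneg) hA fun p k hk => by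
      rw [abs_sub_comm]; exact hA' p.1 p.2 k hk
  obtain ⟨a, ha, ha'⟩ := hα
  have hαc : CReal α := CReal.of_rat (fun n => (hpos n).le) ha ha'
  have hsummable : Summable α := by
    by_contra hns
    rw [tsum_eq_zero_of_not_summable hns] at hsum
    exact zero_ne_one hsum
  have hPu : ∀ n, CReal fun x : S => (Pn n (cyl x)).toReal := fun n =>
    hu.comp ((Computable.const n).pair Computable.id)
  have hp : ∀ m, 0 < (Pn nstar (cyl (seqTake ω m))).toReal := fun m =>
    ENNReal.toReal_pos (measure_cyl_ne_zero_of_random h1 m) (measure_ne_top _ _)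
  have hbig : ∀ c : ℝ, ∀ᶠ j : ℕ in atTop, c < α nstar * 2 ^ j := fun c =>
    ((tendsto_pow_atTop_atTop_of_one_lt one_lt_two).const_mul_atTop
      (hpos nstar)).eventually_gt_atTop c
  obtain ⟨N, J, hJ⟩ := weighted_likelihood_le_of_ge hu hαc (hsum ▸ hsummable.hasSum) h1
  obtain ⟨j, hj1, hjJ⟩ := ((hbig 1).and (eventually_ge_atTop J)).exists
  -- a maximizer `≥ N j` would have weighted likelihood below that of `nstar`
  have hlt : ∀ m, nhat (seqTake ω m) < N j := by
    intro m
    by_contra! hge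
    have h3 := hJ j hjJ _ hge m
    have h4 := hmax (seqTake ω m) nstar
    have h5 := mul_le_mul_of_nonneg_left h4 (show (0 : ℝ) ≤ 2 ^ j by positivity)
    have h6 := mul_lt_mul_of_pos_right hj1 (hp m)
    linarith
  have hne : ∀ n ∈ Finset.range (N j), ∀ᶠ m in atTop, n ≠ nstar → nhat (seqTake ω m) ≠ n := by
    intro n _
    by_cases hn : n = nstar
    · exact Eventually.of_forall fun m h => absurd hn h
    obtain ⟨K, hK⟩ := likelihood_ratio_le_of_not_random (hPu nstar) (hPu n) h1 (h2 n hn)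
    obtain ⟨i, hi1, hiK⟩ := ((hbig (α n)).and (eventually_ge_atTop K)).exists
    filter_upwards [hK i hiK] with m hm _ heq
    have h4 := hmax (seqTake ω m) nstar
    rw [heq] at h4
    have h5 := mul_le_mul_of_nonneg_left h4 (show (0 : ℝ) ≤ 2 ^ i by positivity)
    have h6 := mul_lt_mul_of_pos_right hi1 (hp m)
    have h7 := mul_le_mul_of_nonneg_left hm (hpos n).le
    linarith
  filter_upwards [(eventually_all_finset _).2 hne] with m hm
  by_contra h
  exact hm _ (Finset.mem_range.2 (hlt m)) h rfl

end AlgRand
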